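/- (Proposition 5.1) Let p be an odd prime and let ζ ∈ ℤ_p be a primitive (p−1)-st root of unity. Let Φ_ζ be the ℚ_p-algebra endomorphism of V := ℚ_p[X]/(X^p) sending the class x of X to 1 − Σ_{n=0}^{p−1} C(ζ,n)(−x)^n. Then for every integer k with 1 ≤ k ≤ p−2, the eigenspace {g ∈ V : Φ_ζ(g) = ζ^k · g} is a one-dimensional ℚ_p-subspace of V, spanned by an element of the form f_k = x^k + Σ_{j=k+1}^{p−1} a_j x^j with a_j ∈ ℚ_p (i.e. a polynomial whose lowest-degree term is x^k with coefficient 1). -/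

import Mathlib

open Polynomial

noncomputable def pbinom (p : ℕ) [Fact p.Prime] (y : ℚ_[p]) (n : ℕ) : ℚ_[p] :=
  (descPochhammer ℚ_[p] n).eval y / (n.factorial : ℚ_[p])

noncomputable abbrev TruncV (p : ℕ) [Fact p.Prime] : Type :=
  Polynomial ℚ_[p] ⧸ Ideal.span {(Polynomial.X : Polynomial ℚ_[p]) ^ p}

noncomputable def xV (p : ℕ) [Fact p.Prime] : TruncV p :=
  Ideal.Quotient.mk _ Polynomial.X

noncomputable def phiImg (p : ℕ) [Fact p.Prime] (a : ℚ_[p]) : TruncV p :=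
  1 - ∑ n ∈ Finset.range p, pbinom p a n • (-xV p) ^ n

/-!
Since `Φ x = ζ x + O(x²)`, we have `Φ (x ^ j) = ζ ^ j x ^ j + O(x ^ (j + 1))`, so `Φ` is lower
triangular in the basis `1, x, …, x ^ (p - 1)`, with diagonal entries `1, ζ, …, ζ ^ (p - 1)`.
Among these `ζ ^ k` occurs exactly once if `1 ≤ k ≤ p - 2`: the only coincidence is
`ζ ^ 0 = ζ ^ (p - 1)`. At the lowest index where it is nonzero, an eigenvector of a triangular map
picks up the diagonal entry, which must therefore be its eigenvalue. So for an eigenvalue occurring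
once on the diagonal, at `k`, that lowest index is `k`, and an eigenvector is determined by its
coordinate at `k`.
-/

open Module

section LowerTriangular

variable {ι R : Type*} [LinearOrder ι] [Fintype ι]

theorem mulVec_apply_of_isLowerTriangular [NonUnitalNonAssocSemiring R] {M : Matrix ι ι R}
    (hM : M.IsLowerTriangular) {v : ι → R} {i : ι} (hv : ∀ j < i, v j = 0) :
    M.mulVec v i = M i i * v i := by
  rw [Matrix.mulVec, dotProduct]
  refine Finset.sum_eq_single i (fun j _ hji ↦ ?_) (by simp)
  rcases hji.lt_or_gt with hlt | hgt
  · rw [hv j hlt, mul_zero]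
  · rw [hM hgt, zero_mul]

theorem apply_eq_zero_of_mulVec_eq_smul [Ring R] [NoZeroDivisors R] {M : Matrix ι ι R}
    (hM : M.IsLowerTriangular) {v : ι → R} {μ : R} (hv : M.mulVec v = μ • v) (i : ι)
    (hi : ∀ j ≤ i, M j j = μ → v j = 0) : v i = 0 := by
  induction i using WellFoundedLT.induction with
  | ind i ih =>
    have hlow : ∀ j < i, v j = 0 := fun j hj ↦ ih j hj fun l hl ↦ hi l (hl.trans hj.le)
    have hdiag : (M i i - μ) * v i = 0 := by
      rw [sub_mul, ← mulVec_apply_of_isLowerTriangular hM hlow, hv, Pi.smul_apply, smul_eq_mul,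
        sub_self]
    exact (mul_eq_zero.mp hdiag).elim (fun h ↦ hi i le_rfl (sub_eq_zero.mp h)) id

theorem charpoly_of_isLowerTriangular [CommRing R] {M : Matrix ι ι R}
    (hM : M.IsLowerTriangular) : M.charpoly = ∏ i, (X - C (M i i)) := by
  rw [← Matrix.charpoly_transpose]
  exact Matrix.charpoly_of_isUpperTriangular _ hM.transpose

variable {V : Type*} [AddCommGroup V]

theorem hasEigenvalue_of_isLowerTriangular [CommRing R] [IsDomain R] [Module R V]
    {b : Basis ι R V} {T : End R V} (hT : (LinearMap.toMatrix b b T).IsLowerTriangular) (k : ι) :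
    T.HasEigenvalue (LinearMap.toMatrix b b T k k) := by
  have := Module.Free.of_basis b
  have := Module.Finite.of_basis b
  rw [End.hasEigenvalue_iff_isRoot_charpoly, ← LinearMap.charpoly_toMatrix T b,
    charpoly_of_isLowerTriangular hT]
  exact (isRoot_prod _ _ _).mpr ⟨k, Finset.mem_univ k, root_X_sub_C.mpr rfl⟩

theorem exists_eigenspace_eq_span_of_isLowerTriangular {K : Type*} [Field K] [Module K V]
    {b : Basis ι K V} {T : End K V} (hT : (LinearMap.toMatrix b b T).IsLowerTriangular) {k : ι}
    (hk : ∀ i ≠ k, LinearMap.toMatrix b b T i i ≠ LinearMap.toMatrix b b T k k) :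
    ∃ f : V, b.repr f k = 1 ∧ (∀ i < k, b.repr f i = 0) ∧
      T.eigenspace (LinearMap.toMatrix b b T k k) = Submodule.span K {f} := by
  set μ := LinearMap.toMatrix b b T k k
  have repr_eq_zero {g : V} (hg : g ∈ T.eigenspace μ) (i : ι) (hi : k ≤ i → b.repr g k = 0) :
      b.repr g i = 0 := by
    refine apply_eq_zero_of_mulVec_eq_smul (μ := μ) hT ?_ i fun j hji hj ↦ ?_
    · rw [LinearMap.toMatrix_mulVec_repr, End.mem_eigenspace_iff.mp hg, map_smul,
        Finsupp.coe_smul]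
    · obtain rfl : j = k := not_imp_comm.mp (hk j) (not_not.mpr hj)
      exact hi hji
  have eq_zero {g : V} (hg : g ∈ T.eigenspace μ) (hgk : b.repr g k = 0) : g = 0 :=
    (b.forall_coord_eq_zero_iff).mp fun i ↦ repr_eq_zero hg i fun _ ↦ hgk
  obtain ⟨g, hg, hg0⟩ := (hasEigenvalue_of_isLowerTriangular hT k).exists_hasEigenvector
  have hgk : b.repr g k ≠ 0 := fun h ↦ hg0 (eq_zero hg h)
  set f := (b.repr g k)⁻¹ • g
  have hf : f ∈ T.eigenspace μ := Submodule.smul_mem _ _ hg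
  have hfk : b.repr f k = 1 := by simp [f, hgk]
  refine ⟨f, hfk, fun i hi ↦ repr_eq_zero hf i fun h ↦ absurd h hi.not_ge, le_antisymm ?_ ?_⟩
  · intro h hh
    refine Submodule.mem_span_singleton.mpr ⟨b.repr h k, (sub_eq_zero.mp ?_).symm⟩
    exact eq_zero (sub_mem hh (Submodule.smul_mem _ _ hf)) (by simp [hfk])
  · rwa [Submodule.span_singleton_le_iff_mem]

end LowerTriangular

theorem pow_succ_dvd_pow_sub_mul_pow {R : Type*} [CommRing R] {x y a : R}
    (h : x ^ 2 ∣ y - a * x) (n : ℕ) : x ^ (n + 1) ∣ y ^ n - (a * x) ^ n := by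
  obtain ⟨u, hu⟩ := h
  obtain rfl : y = x * (a + x * u) := by linear_combination hu
  have hfactor : a + x * u - a ∣ (a + x * u) ^ n - a ^ n := sub_dvd_pow_sub_pow _ _ n
  rw [mul_comm a, mul_pow, mul_pow, ← mul_sub, pow_succ]
  exact mul_dvd_mul_left _ ((Dvd.intro u (add_sub_cancel_left a _).symm).trans hfactor)

section NilpotentPowerBasis

variable {R A : Type*} [CommRing R] [Ring A] [Algebra R A]

theorem exists_eq_gen_pow_add_sum (pb : PowerBasis R A) {f : A} {k : Fin pb.dim}
    (hk : pb.basis.repr f k = 1) (hlow : ∀ i < k, pb.basis.repr f i = 0) :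
    ∃ c : ℕ → R, f = pb.gen ^ (k : ℕ) +
      ∑ j ∈ Finset.Ico ((k : ℕ) + 1) pb.dim, c j • pb.gen ^ j := by
  let c (j : ℕ) : R := if h : j < pb.dim then pb.basis.repr f ⟨j, h⟩ else 0
  have hc (i : Fin pb.dim) : c i = pb.basis.repr f i := dif_pos i.isLt
  have hc_low (j : ℕ) (hj : j < k) : c j = 0 :=
    (hc ⟨j, hj.trans k.isLt⟩).trans (hlow _ hj)
  refine ⟨c, ?_⟩
  calc
    f = ∑ i : Fin pb.dim, c i • pb.gen ^ (i : ℕ) := by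
      simp only [hc, ← pb.basis_eq_pow, pb.basis.sum_repr]
    _ = ∑ j ∈ Finset.range pb.dim, c j • pb.gen ^ j :=
      Fin.sum_univ_eq_sum_range (fun j ↦ c j • pb.gen ^ j) pb.dim
    _ = ∑ j ∈ Finset.Ico (k : ℕ) pb.dim, c j • pb.gen ^ j := by
      rw [← Finset.sum_range_add_sum_Ico _ k.isLt.le, Finset.sum_eq_zero, zero_add]
      intro j hj
      rw [hc_low j (Finset.mem_range.mp hj), zero_smul]
    _ = _ := by rw [Finset.sum_eq_sum_Ico_succ_bot k.isLt, hc, hk, one_smul]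

theorem repr_gen_pow {pb : PowerBasis R A} (hnil : pb.gen ^ pb.dim = 0) (n : ℕ)
    (i : Fin pb.dim) : pb.basis.repr (pb.gen ^ n) i = if n = i then 1 else 0 := by
  rcases lt_or_ge n pb.dim with hn | hn
  · rw [← pb.basis_eq_pow ⟨n, hn⟩, Basis.repr_self, Finsupp.single_apply]
    simp only [Fin.ext_iff]
  · rw [pow_eq_zero_of_le hn hnil, map_zero, if_neg (i.isLt.trans_le hn).ne', Finsupp.zero_apply]

theorem repr_eq_zero_of_gen_pow_dvd {pb : PowerBasis R A} (hnil : pb.gen ^ pb.dim = 0) {n : ℕ}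
    {v : A} (hv : pb.gen ^ n ∣ v) {i : Fin pb.dim} (hi : (i : ℕ) < n) :
    pb.basis.repr v i = 0 := by
  obtain ⟨w, rfl⟩ := hv
  rw [← pb.basis.sum_repr w, Finset.mul_sum, map_sum, Finsupp.finsetSum_apply]
  refine Finset.sum_eq_zero fun j _ ↦ ?_
  rw [mul_smul_comm, pb.basis_eq_pow, ← pow_add, map_smul, Finsupp.smul_apply,
    repr_gen_pow hnil, if_neg (by omega), smul_zero]

theorem toMatrix_algHom_apply_of_le {B : Type*} [CommRing B] [Algebra R B] {pb : PowerBasis R B}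
    (hnil : pb.gen ^ pb.dim = 0) {Φ : B →ₐ[R] B} {a : R}
    (hΦ : pb.gen ^ 2 ∣ Φ pb.gen - a • pb.gen) {i j : Fin pb.dim} (hij : i ≤ j) :
    LinearMap.toMatrix pb.basis pb.basis Φ.toLinearMap i j =
      if j = i then a ^ (j : ℕ) else 0 := by
  have hdvd : pb.gen ^ ((j : ℕ) + 1) ∣ Φ (pb.gen ^ (j : ℕ)) - a ^ (j : ℕ) • pb.gen ^ (j : ℕ) := by
    rw [Algebra.smul_def] at hΦ
    simpa only [map_pow, Algebra.smul_def, mul_pow] using pow_succ_dvd_pow_sub_mul_pow hΦ j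
  have hcoord := repr_eq_zero_of_gen_pow_dvd hnil hdvd (Nat.lt_succ_of_le hij)
  rw [map_sub, map_smul, Finsupp.sub_apply, Finsupp.smul_apply, repr_gen_pow hnil,
    sub_eq_zero] at hcoord
  rw [LinearMap.toMatrix_apply, pb.basis_eq_pow, AlgHom.toLinearMap_apply, hcoord]
  simp only [Fin.ext_iff, smul_eq_mul, mul_ite, mul_one, mul_zero]

end NilpotentPowerBasis

theorem eigenspace_span_dim_one_general {K A : Type*} [Field K] [CommRing A] [Algebra K A]
    (pb : PowerBasis K A) (hnil : pb.gen ^ pb.dim = 0) (Φ : A →ₐ[K] A) (a : K)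
    (hΦ : pb.gen ^ 2 ∣ Φ pb.gen - a • pb.gen) (k : ℕ) (hk : k < pb.dim)
    (hne : ∀ j < pb.dim, j ≠ k → a ^ j ≠ a ^ k) :
    ∃ c : ℕ → K,
      Module.End.eigenspace Φ.toLinearMap (a ^ k) =
        Submodule.span K
          {pb.gen ^ k + ∑ j ∈ Finset.Ico (k + 1) pb.dim, c j • pb.gen ^ j} ∧
      Module.finrank K (Module.End.eigenspace Φ.toLinearMap (a ^ k)) = 1 := by
  have hlower : (LinearMap.toMatrix pb.basis pb.basis Φ.toLinearMap).IsLowerTriangular :=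
    fun i j hij ↦ by
      have hlt : i < j := OrderDual.toDual_lt_toDual.mp hij
      rw [toMatrix_algHom_apply_of_le hnil hΦ hlt.le, if_neg hlt.ne']
  have hdiag (i : Fin pb.dim) :
      LinearMap.toMatrix pb.basis pb.basis Φ.toLinearMap i i = a ^ (i : ℕ) :=
    (toMatrix_algHom_apply_of_le hnil hΦ le_rfl).trans (if_pos rfl)
  obtain ⟨f, hfk, hlow, hspan⟩ := exists_eigenspace_eq_span_of_isLowerTriangular hlower
    (k := ⟨k, hk⟩) fun i hi ↦ by
      simpa only [hdiag] using hne i i.isLt (Fin.val_ne_of_ne hi)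
  rw [hdiag] at hspan
  have hf0 : f ≠ 0 := by
    rintro rfl
    simp at hfk
  obtain ⟨c, hc⟩ := exists_eq_gen_pow_add_sum pb hfk hlow
  exact ⟨c, hc ▸ hspan, hspan ▸ finrank_span_singleton hf0⟩

section AdamsOperation

variable (p : ℕ) [Fact p.Prime]

/-- The power basis `1, x, …, x ^ (p - 1)` of `ℚ_p[X]/(X ^ p)`. The basis of `AdjoinRoot (X ^ p)` is
reindexed so that its dimension is `p` by definition, rather than `(X ^ p).natDegree`. -/
noncomputable def truncPowerBasis : PowerBasis ℚ_[p] (TruncV p) :=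
  let pb := AdjoinRoot.powerBasis' (monic_X_pow (R := ℚ_[p]) p)
  have hdim : pb.dim = p := natDegree_X_pow p
  show PowerBasis ℚ_[p] (AdjoinRoot (X ^ p : ℚ_[p][X])) from
    { gen := pb.gen
      dim := p
      basis := pb.basis.reindex (finCongr hdim)
      basis_eq_pow i := by simp }

theorem xV_pow_self : xV p ^ p = 0 := by
  rw [xV, ← map_pow, Ideal.Quotient.eq_zero_iff_mem]
  exact Ideal.mem_span_singleton_self _

theorem sq_dvd_phiImg_sub_smul (a : ℚ_[p]) : xV p ^ 2 ∣ phiImg p a - a • xV p := by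
  have hp : 2 ≤ p := (Fact.out : p.Prime).two_le
  have hlow : ∑ n ∈ Finset.range 2, pbinom p a n • (-xV p) ^ n = 1 - a • xV p := by
    simp [Finset.sum_range_succ, pbinom, sub_eq_add_neg]
  have hhigh : xV p ^ 2 ∣ ∑ n ∈ Finset.Ico 2 p, pbinom p a n • (-xV p) ^ n :=
    Finset.dvd_sum fun n hn ↦ dvd_smul_of_dvd _ <|
      neg_sq (xV p) ▸ pow_dvd_pow (-xV p) (Finset.mem_Ico.mp hn).1
  rw [phiImg, ← Finset.sum_range_add_sum_Ico _ hp, hlow]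
  convert hhigh.neg_right using 1
  abel

end AdamsOperation

theorem pow_ne_pow_of_isPrimitiveRoot {M : Type*} [CommMonoid M] {ζ : M} {n j k : ℕ}
    (hζ : IsPrimitiveRoot ζ n) (hk0 : k ≠ 0) (hkn : k < n) (hjn : j ≤ n) (hjk : j ≠ k) :
    ζ ^ j ≠ ζ ^ k := by
  rcases hjn.lt_or_eq with hlt | rfl
  · exact fun h ↦ hjk (hζ.pow_inj hlt hkn h)
  · exact hζ.pow_eq_one ▸ (hζ.pow_ne_one_of_pos_of_lt hk0 hkn).symm

/-- Proposition 5.1: for `1 ≤ k ≤ p-2`, the `ζ^k`-eigenspace of the Adams operation `ψ_ζ`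
on `ℚ_p[X]/(X^p)` is one-dimensional, spanned by `f_k = x^k + higher order terms`. -/
theorem eigenspace_span_dim_one (p : ℕ) [Fact p.Prime] (hp : Odd p) (ζ : ℤ_[p])
    (hζ : ζ ^ (p - 1) = 1) (hord : orderOf ζ = p - 1)
    (Φ : TruncV p →ₐ[ℚ_[p]] TruncV p)
    (hΦ : Φ (xV p) = phiImg p (ζ : ℚ_[p]))
    (k : ℕ) (hk1 : 1 ≤ k) (hk2 : k ≤ p - 2) :
    ∃ c : ℕ → ℚ_[p],
      Module.End.eigenspace (Φ.toLinearMap) ((ζ : ℚ_[p]) ^ k) =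
        Submodule.span ℚ_[p]
          {xV p ^ k + ∑ j ∈ Finset.Ico (k + 1) p, c j • xV p ^ j} ∧
      Module.finrank ℚ_[p]
        (Module.End.eigenspace (Φ.toLinearMap) ((ζ : ℚ_[p]) ^ k)) = 1 := by
  have hprim : IsPrimitiveRoot (ζ : ℚ_[p]) (p - 1) :=
    (hord ▸ IsPrimitiveRoot.orderOf ζ).map_of_injective (f := PadicInt.Coe.ringHom)
      Subtype.coe_injective
  exact eigenspace_span_dim_one_general (truncPowerBasis p) (xV_pow_self p) Φ ζ
    (hΦ ▸ sq_dvd_phiImg_sub_smul p ζ) k (show k < p by omega) fun j hj hjk ↦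
      pow_ne_pow_of_isPrimitiveRoot hprim (by omega) (by omega) (Nat.le_sub_one_of_lt hj) hjk
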